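/- Let n be a prime number, ω = e^{2πi/n}, and let k_1 < k_2 < ... < k_m and a_1 < a_2 < ... < a_m be two sequences of integers in {0, 1, ..., n−1}. Then the m×m matrix with (i,j) entry ω^{k_i a_j} is invertible. (This is the formulation of the Chebotarev theorem as the non-vanishing of all minors of the Fourier matrix in 0-indexed form.) -/

import Mathlib

open Matrix

/-!
Suppose the matrix is singular and let `v ≠ 0` be in its kernel. Choose a valuation ring `V` of `ℂ`
in whose maximal ideal `n` lies, and divide `v` by an entry of largest valuation, so that its
entries lie in `V` and one of them is `1`. The polynomial `g = ∑ j, v j • X ^ a j` over `V` vanishes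
at the `m` distinct points `ω ^ k i`, so it is divisible by `∏ i, (X - ω ^ k i)`. The residue field
has characteristic `n`, so `(ω - 1) ^ n` reduces to `ω ^ n - 1 = 0` and `ω` reduces to `1`; hence
the reduction of `g` is divisible by `(X - 1) ^ m`. Applying the Euler operator `X * d/dX`
repeatedly and evaluating at `1` gives `∑ j, v j * (a j) ^ l = 0` in the residue field for all
`l < m` (`sum_mul_pow_eq_zero_of_X_sub_one_pow_dvd`). The `a j` are distinct modulo `n`, so
this Vandermonde system forces every `v j` to reduce to `0`
(`map_eq_zero_of_forall_sum_eq_zero`), contradicting the entry `1`.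
-/

open Polynomial in
/-- The sum `∑ j, d j * (a j) ^ l` is the value at `1` of `(X * d/dX) ^ l` applied to
`∑ j, d j * X ^ a j`, and each application of `X * d/dX` lowers the order of vanishing at `1`
by at most one. -/
lemma sum_mul_pow_eq_zero_of_X_sub_one_pow_dvd {K : Type*} [Field K] {m : ℕ} (a : Fin m → ℕ)
    (l : ℕ) : ∀ d : Fin m → K,
      (X - C 1 : K[X]) ^ (l + 1) ∣ ∑ j, C (d j) * X ^ a j → ∑ j, d j * (a j : K) ^ l = 0 := by
  induction l with
  | zero =>
    intro d h
    rw [zero_add, pow_one, dvd_iff_isRoot, IsRoot.def, eval_finsetSum] at h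
    simpa using h
  | succ l ih =>
    intro d h
    have h1 := (pow_sub_one_dvd_derivative_of_pow_dvd h).mul_left X
    have h2 : X * derivative (∑ j, C (d j) * X ^ a j) = ∑ j, C (d j * (a j : K)) * X ^ a j := by
      rw [derivative_sum, Finset.mul_sum]
      refine Finset.sum_congr rfl fun j _ => ?_
      rw [derivative_C_mul_X_pow]
      rcases Nat.eq_zero_or_pos (a j) with h0 | h0
      · simp [h0]
      · rw [mul_left_comm, ← pow_succ', Nat.sub_add_cancel h0]
    rw [h2] at h1
    rw [← ih _ h1]
    exact Finset.sum_congr rfl fun j _ => by ring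

open Polynomial in
/-- If `∑ j, c j * X ^ a j` has as many distinct roots as terms, all reducing to `1` in
characteristic `p`, and its exponents are distinct and less than `p`, then all its coefficients
reduce to `0`. -/
lemma map_eq_zero_of_forall_sum_eq_zero {R K : Type*} [CommRing R] [IsDomain R] [Field K]
    (φ : R →+* K) (p : ℕ) [CharP K p] {m : ℕ} (a : Fin m → ℕ) (ha : Function.Injective a)
    (hap : ∀ j, a j < p) (w : Fin m → R) (hw : Function.Injective w) (hφ : ∀ i, φ (w i) = 1)
    (c : Fin m → R) (hc : ∀ i, ∑ j, c j * w i ^ a j = 0) : ∀ j, φ (c j) = 0 := by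
  have hdvd : ∏ i, (X - C (w i)) ∣ ∑ j, C (c j) * X ^ a j := by
    by_cases hg : ∑ j, C (c j) * X ^ a j = 0
    · rw [hg]; exact dvd_zero _
    have := (Multiset.prod_X_sub_C_dvd_iff_le_roots hg (Finset.univ.val.map w)).2 <| by
      rw [Multiset.le_iff_subset (Finset.univ.nodup.map hw)]
      intro x hx
      obtain ⟨i, -, rfl⟩ := Multiset.mem_map.1 hx
      rw [mem_roots hg, IsRoot.def, eval_finsetSum]
      simpa using hc i
    rwa [Multiset.map_map] at this
  have hdvd' : (X - C 1 : K[X]) ^ m ∣ ∑ j, C (φ (c j)) * X ^ a j := by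
    have := map_dvd (mapRingHom φ) hdvd
    simpa [map_prod, Polynomial.map_sum, hφ] using this
  have hinj : Function.Injective fun j => (a j : K) := fun i j h =>
    ha (CharP.natCast_injOn_Iio K p (hap i) (hap j) h)
  have := eq_zero_of_forall_pow_sum_mul_pow_eq_zero (v := fun j => φ (c j)) hinj fun l =>
    sum_mul_pow_eq_zero_of_X_sub_one_pow_dvd a l (fun j => φ (c j))
      ((pow_dvd_pow _ l.2).trans hdvd')
  exact congrFun this

/-- For a prime `p`, some valuation ring of `ℂ` has residue characteristic `p`. -/
lemma exists_valuationSubring_charP_residueField (p : ℕ) (hp : p.Prime) :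
    ∃ V : ValuationSubring ℂ, CharP (IsLocalRing.ResidueField V) p := by
  have hI : Ideal.span {(p : (⊥ : Subring ℂ))} ≠ ⊤ := by
    rw [Ne, Ideal.span_singleton_eq_top]
    intro h
    obtain ⟨⟨y, hy⟩, h⟩ := h.exists_right_inv
    obtain ⟨z, rfl⟩ := Subring.mem_bot.1 hy
    have h' : (p : ℂ) * z = 1 := by simpa using congrArg Subtype.val h
    have h'' : (p : ℤ) * z = 1 := by exact_mod_cast h'
    exact hp.not_isUnit (Int.ofNat_isUnit.1 (IsUnit.of_mul_eq_one _ h''))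
  obtain ⟨V, -, hV⟩ := Ideal.image_subset_nonunits_valuationSubring _ hI
  refine ⟨V, ?_⟩
  have hpV : (p : ℂ) ∈ V.nonunits := hV ⟨p, Ideal.mem_span_singleton_self _, by simp⟩
  have h0 : (p : IsLocalRing.ResidueField V) = 0 := by
    rw [← map_natCast (IsLocalRing.residue V), IsLocalRing.residue_eq_zero_iff]
    rw [ValuationSubring.mem_nonunits_iff_exists_mem_maximalIdeal] at hpV
    obtain ⟨_, h⟩ := hpV
    exact h
  exact (CharP.charP_iff_prime_eq_zero hp).2 h0

/-- **Chebotarev's theorem, 0-indexed minor form.** Let `n` be prime,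
`ω = e^{2πi/n}`, and let `k_1 < ⋯ < k_m` and `a_1 < ⋯ < a_m` be two strictly
increasing sequences of integers in `{0, 1, …, n-1}`. Then the `m × m` matrix with
`(i, j)` entry `ω^{k_i a_j}` is invertible. -/
theorem chebotarev_fourier_minor (n : ℕ) (hn : n.Prime)
    (ω : ℂ) (hω : ω = Complex.exp (2 * Real.pi * Complex.I / n))
    (m : ℕ) (k a : Fin m → ℕ)
    (hkmono : StrictMono k) (hamono : StrictMono a)
    (hk : ∀ i, k i < n) (ha : ∀ i, a i < n)
    (M : Matrix (Fin m) (Fin m) ℂ)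
    (hM : ∀ i j : Fin m, M i j = ω ^ (k i * a j)) :
    IsUnit M := by
  have hprim : IsPrimitiveRoot ω n := hω ▸ Complex.isPrimitiveRoot_exp n hn.ne_zero
  by_contra hunit
  have hdet : M.det = 0 := by
    by_contra h
    exact hunit ((Matrix.isUnit_iff_isUnit_det M).2 (isUnit_iff_ne_zero.2 h))
  obtain ⟨v, hv, hMv⟩ := Matrix.exists_mulVec_eq_zero_iff.2 hdet
  obtain ⟨j₁, hj₁⟩ := Function.ne_iff.1 hv
  obtain ⟨V, hV⟩ := exists_valuationSubring_charP_residueField n hn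
  have : Fact n.Prime := ⟨hn⟩
  have : Nonempty (Fin m) := ⟨j₁⟩
  obtain ⟨j₀, hj₀⟩ := Finite.exists_max fun j => V.valuation (v j)
  have hv0 : v j₀ ≠ 0 := by
    intro h
    have := hj₀ j₁
    rw [h, map_zero, le_zero_iff, map_eq_zero] at this
    exact hj₁ this
  have hmem : ∀ j, v j / v j₀ ∈ V := fun j => by
    rw [← V.valuation_le_one_iff, map_div₀]
    exact div_le_one_of_le₀ (hj₀ j) zero_le
  have hωV : ω ∈ V := by
    rw [← V.valuation_le_one_iff]
    refine (pow_le_one_iff hn.ne_zero).1 ?_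
    rw [← map_pow, hprim.pow_eq_one, map_one]
  let ωV : V := ⟨ω, hωV⟩
  have hres : IsLocalRing.residue V ωV = 1 := by
    have h1 : ωV ^ n = 1 := Subtype.ext hprim.pow_eq_one
    have h2 : (IsLocalRing.residue V ωV - 1) ^ n = 0 := by
      rw [sub_pow_char, one_pow, ← map_pow, h1, map_one, sub_self]
    exact sub_eq_zero.1 (eq_zero_of_pow_eq_zero h2)
  have key := map_eq_zero_of_forall_sum_eq_zero (IsLocalRing.residue V) n a hamono.injective ha
    (fun i => ωV ^ k i)
    (fun i j h => hkmono.injective <|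
      hprim.pow_inj (hk i) (hk j) (by simpa [ωV] using congrArg Subtype.val h))
    (fun i => by rw [map_pow, hres, one_pow])
    (fun j => ⟨v j / v j₀, hmem j⟩)
    (fun i => by
      have hi : ∑ j, ω ^ (k i * a j) * v j = 0 := by
        simpa [Matrix.mulVec, dotProduct, hM] using congrFun hMv i
      apply Subtype.ext
      have : ∑ j, v j / v j₀ * (ω ^ k i) ^ a j = (∑ j, ω ^ (k i * a j) * v j) / v j₀ := by
        rw [Finset.sum_div]
        exact Finset.sum_congr rfl fun j _ => by rw [← pow_mul]; ring
      rw [hi, zero_div] at this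
      simpa [ωV] using this) j₀
  have hone : (⟨v j₀ / v j₀, hmem j₀⟩ : V) = 1 := Subtype.ext (div_self hv0)
  rw [hone, map_one] at key
  exact one_ne_zero key
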